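/- Let IST_n(F_q) denote the number of n×n symmetric tridiagonal matrices over F_q with nonzero determinant. Then IST_1 = q−1, IST_2 = q^2(q−1), and for all n ≥ 3, IST_n = q(q−1)·IST_{n−1} + q^2(q−1)·IST_{n−2}. -/

import Mathlib

/-!
Expanding the determinant along the first row and then the first column gives
`d_n = a * d_{n-1} - b ^ 2 * d_{n-2}`, where `a` and `b` are the first diagonal and off-diagonal
entries and `d_{n-1}`, `d_{n-2}` are the determinants of the trailing submatrices
(`det_triMat_succ_succ`).  For fixed trailing entries, the number of `(a, b)` with `d_n ≠ 0` is
`q (q - 1)` unless `d_{n-1} = d_{n-2} = 0`, when it is `0` (`card_pairs_ne`).  Hence `IST_n` is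
`q (q - 1)` times the number of trailing matrices with `d_{n-1} ≠ 0` or `d_{n-2} ≠ 0`
(`istCard_succ_succ`).  Those with `d_{n-1} ≠ 0` number `IST_{n-1}`; those with `d_{n-1} = 0` and
`d_{n-2} ≠ 0` number `q * IST_{n-2}`, since the off-diagonal entry is free and then the diagonal
entry is determined (`card_pairs_eq`).
-/

/-- The `n × n` symmetric tridiagonal matrix with diagonal entries `x` and
off-diagonal (super/sub-diagonal) entries `r`. -/
def triMat {R : Type*} [CommRing R] (n : ℕ) (x : Fin n → R) (r : Fin (n - 1) → R) :
    Matrix (Fin n) (Fin n) R :=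
  Matrix.of fun i j =>
    if i = j then x i
    else if h : (i : ℕ) + 1 = (j : ℕ) then r ⟨i, by have := j.isLt; omega⟩
    else if h' : (j : ℕ) + 1 = (i : ℕ) then r ⟨j, by have := i.isLt; omega⟩
    else 0

/-- The number of `n × n` symmetric tridiagonal matrices over `F_q` with nonzero
determinant. -/
def istCard (F : Type*) [Field F] [Fintype F] [DecidableEq F] (n : ℕ) : ℕ :=
  Fintype.card {p : (Fin n → F) × (Fin (n - 1) → F) // (triMat n p.1 p.2).det ≠ 0}

/-- The entries of an `n × n` symmetric tridiagonal matrix: diagonal, then off-diagonal. -/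
abbrev TriData (R : Type*) (n : ℕ) : Type _ := (Fin n → R) × (Fin (n - 1) → R)

/-- The entries of the submatrix obtained by deleting the first row and column. -/
def TriData.tail {R : Type*} {n : ℕ} (p : TriData R (n + 1)) : TriData R n :=
  (fun i => p.1 i.succ, fun i => p.2 ⟨i + 1, by omega⟩)

/-- The determinant of the symmetric tridiagonal matrix with the given entries. -/
def TriData.det {R : Type*} [CommRing R] {n : ℕ} (p : TriData R n) : R :=
  (triMat n p.1 p.2).det

/-- Splitting off the first diagonal and the first off-diagonal entry. -/
def TriData.splitEquiv (R : Type*) (n : ℕ) :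
    TriData R (n + 2) ≃ TriData R (n + 1) × (R × R) where
  toFun p := (p.tail, (p.1 0, p.2 (0 : Fin (n + 1))))
  invFun t := (Fin.cons t.2.1 t.1.1, (Fin.cons t.2.2 t.1.2 : Fin (n + 1) → R))
  left_inv p := by
    refine Prod.ext (funext fun i => ?_) (funext fun i => ?_)
    · refine Fin.cases ?_ (fun j => ?_) i <;> rfl
    · change Fin (n + 1) at i
      refine Fin.cases ?_ (fun j => ?_) i <;> rfl
  right_inv t := rfl

lemma triMat_submatrix_succ {R : Type*} [CommRing R] {n : ℕ} (p : TriData R (n + 1)) :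
    (triMat (n + 1) p.1 p.2).submatrix Fin.succ Fin.succ = triMat n p.tail.1 p.tail.2 := by
  ext i j
  simp [triMat, TriData.tail, Fin.succ_inj]

/-- The three-term recurrence for the determinant of a symmetric tridiagonal matrix. -/
lemma det_triMat_succ_succ {R : Type*} [CommRing R] {n : ℕ} (p : TriData R (n + 2)) :
    p.det = p.1 0 * p.tail.det - p.2 (0 : Fin (n + 1)) ^ 2 * p.tail.tail.det := by
  have h00 : triMat (n + 2) p.1 p.2 0 0 = p.1 0 := by simp [triMat]
  have h01 : triMat (n + 2) p.1 p.2 0 (Fin.succ 0) = p.2 (0 : Fin (n + 1)) := by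
    simp [triMat]
  have h10 : triMat (n + 2) p.1 p.2 (Fin.succ 0) 0 = p.2 (0 : Fin (n + 1)) := by
    simp [triMat]
  have h0 (i : Fin n) : triMat (n + 2) p.1 p.2 0 i.succ.succ = 0 := by
    simp [triMat, Fin.ext_iff]
  have h0' (i : Fin n) : triMat (n + 2) p.1 p.2 i.succ.succ 0 = 0 := by
    simp [triMat, Fin.ext_iff]
  -- The minor of the entry `(0, 1)` has first column `(b, 0, …, 0)`.
  have hminor : ((triMat (n + 2) p.1 p.2).submatrix Fin.succ
      (Fin.succAbove (Fin.succ 0))).det = p.2 (0 : Fin (n + 1)) * p.tail.tail.det := by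
    rw [Matrix.det_succ_column_zero, Fin.sum_univ_succ, Finset.sum_eq_zero]
    · have hs : ((triMat (n + 2) p.1 p.2).submatrix Fin.succ
          (Fin.succAbove (Fin.succ 0))).submatrix (Fin.succAbove 0) Fin.succ
          = triMat n p.tail.tail.1 p.tail.tail.2 := by
        rw [← triMat_submatrix_succ, ← triMat_submatrix_succ]
        ext i j
        simp
      rw [hs]
      have h10' : triMat (n + 2) p.1 p.2 1 0 = p.2 (0 : Fin (n + 1)) := h10
      simp [TriData.det, h10']
    · intro i _
      have : (Fin.succAbove (Fin.succ 0) (0 : Fin (n + 1))) = 0 := by simp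
      simp only [Matrix.submatrix_apply, this, h0']
      simp
  rw [TriData.det, Matrix.det_succ_row_zero, Fin.sum_univ_succ, Fin.sum_univ_succ,
    Finset.sum_eq_zero (fun i _ => by rw [h0]; simp), h00, h01, hminor, Fin.succAbove_zero,
    triMat_submatrix_succ]
  simp [TriData.det]
  ring

lemma sum_ite_ne {F : Type*} [Fintype F] [DecidableEq F] (c : F) :
    (∑ a : F, if a ≠ c then 1 else 0) = Fintype.card F - 1 := by
  rw [← Finset.card_filter, Finset.filter_ne', Finset.card_erase_of_mem (Finset.mem_univ _),
    Finset.card_univ]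

/-- Summing over matrices of size `n + 2` by first fixing the trailing submatrix. -/
lemma sum_triData_succ_succ {F : Type*} [Field F] [Fintype F] (n : ℕ)
    (f : F → TriData F (n + 1) → ℕ) :
    (∑ p : TriData F (n + 2), f p.det p.tail) =
      ∑ s : TriData F (n + 1), ∑ t : F × F, f (t.1 * s.det - t.2 ^ 2 * s.tail.det) s := by
  rw [← Fintype.sum_prod_type']
  refine Fintype.sum_equiv (TriData.splitEquiv F n) _ _ fun p => ?_
  rw [det_triMat_succ_succ]
  rfl

section Count

variable {F : Type*} [Field F] [Fintype F] [DecidableEq F]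

lemma istCard_eq_sum (n : ℕ) :
    istCard F n = ∑ p : TriData F n, if p.det ≠ 0 then 1 else 0 := by
  rw [istCard, Fintype.card_subtype, Finset.card_filter]
  rfl

/-- If `d ≠ 0`, each `b` determines a unique `a` with `a * d = b ^ 2 * e`. -/
lemma card_pairs_eq (d e : F) (hd : d ≠ 0) :
    (∑ t : F × F, if t.1 * d - t.2 ^ 2 * e = 0 then 1 else 0) = Fintype.card F := by
  rw [Fintype.sum_prod_type_right]
  have (b : F) : (∑ a : F, if a * d - b ^ 2 * e = 0 then 1 else 0) = 1 := by
    have h (a : F) : a * d - b ^ 2 * e = 0 ↔ a = b ^ 2 * e / d := by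
      rw [sub_eq_zero, eq_div_iff hd]
    simp [h]
  simp [this]

/-- The number of `(a, b)` with `a * d ≠ b ^ 2 * e`.  When `d = 0 ≠ e` the condition is `b ≠ 0`. -/
lemma card_pairs_ne (d e : F) :
    (∑ t : F × F, if t.1 * d - t.2 ^ 2 * e ≠ 0 then 1 else 0) =
      Fintype.card F * (Fintype.card F - 1) * if d ≠ 0 ∨ e ≠ 0 then 1 else 0 := by
  by_cases hd : d = 0
  · by_cases he : e = 0
    · simp [hd, he]
    · have h (b : F) : 0 - b ^ 2 * e ≠ 0 ↔ b ≠ 0 := by simp [he]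
      rw [Fintype.sum_prod_type]
      simp only [hd, mul_zero, h, sum_ite_ne]
      simp [he]
  · have h (a b : F) : a * d - b ^ 2 * e ≠ 0 ↔ a ≠ b ^ 2 * e / d := by
      rw [ne_eq, sub_eq_zero, ne_eq, eq_div_iff hd]
    rw [Fintype.sum_prod_type_right]
    simp only [h, sum_ite_ne]
    simp [hd]

lemma istCard_succ_succ (n : ℕ) :
    istCard F (n + 2) = Fintype.card F * (Fintype.card F - 1) *
      ∑ s : TriData F (n + 1), if s.det ≠ 0 ∨ s.tail.det ≠ 0 then 1 else 0 := by
  rw [istCard_eq_sum, sum_triData_succ_succ n (fun d _ => if d ≠ 0 then 1 else 0), Finset.mul_sum]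
  exact Finset.sum_congr rfl fun s _ => card_pairs_ne _ _

lemma sum_det_or_tail_det (n : ℕ) :
    (∑ s : TriData F (n + 2), if s.det ≠ 0 ∨ s.tail.det ≠ 0 then 1 else 0) =
      istCard F (n + 2) + Fintype.card F * istCard F (n + 1) := by
  have h (s : TriData F (n + 2)) : (if s.det ≠ 0 ∨ s.tail.det ≠ 0 then 1 else 0) =
      (if s.det ≠ 0 then 1 else 0) + if s.det = 0 ∧ s.tail.det ≠ 0 then 1 else 0 := by
    by_cases h1 : s.det = 0 <;> simp [h1]
  simp only [h, Finset.sum_add_distrib]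
  rw [← istCard_eq_sum, sum_triData_succ_succ n (fun d s => if d = 0 ∧ s.det ≠ 0 then 1 else 0),
    istCard_eq_sum (n + 1), Finset.mul_sum]
  congr 1
  refine Finset.sum_congr rfl fun s _ => ?_
  by_cases hs : s.det = 0
  · simp [hs]
  · simpa [hs] using card_pairs_eq s.det s.tail.det hs

end Count


/-- `IST_1 = q - 1`, `IST_2 = q ^ 2 * (q - 1)`, and for `n ≥ 3`,
`IST_n = q (q-1) IST_{n-1} + q ^ 2 (q-1) IST_{n-2}`. -/
theorem istCard_rec (F : Type*) [Field F] [Fintype F] [DecidableEq F] :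
    istCard F 1 = Fintype.card F - 1 ∧
    istCard F 2 = Fintype.card F ^ 2 * (Fintype.card F - 1) ∧
    ∀ n, 3 ≤ n →
      istCard F n = Fintype.card F * (Fintype.card F - 1) * istCard F (n - 1) +
        Fintype.card F ^ 2 * (Fintype.card F - 1) * istCard F (n - 2) := by
  refine ⟨?_, ?_, fun n hn => ?_⟩
  · have h (p : TriData F 1) : p.det = p.1 0 := by simp [TriData.det, triMat]
    rw [istCard_eq_sum, Fintype.sum_prod_type]
    simp only [h]
    rw [← (Equiv.funUnique (Fin 1) F).symm.sum_comp]
    simpa using sum_ite_ne (0 : F)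
  · -- The empty determinant is `1`, so all `q` trailing `1 × 1` matrices contribute.
    have h (p : TriData F 1) : p.tail.det ≠ 0 := by simp [TriData.det]
    rw [istCard_succ_succ 0]
    simp [h]
    ring
  · obtain ⟨m, rfl⟩ := Nat.exists_eq_add_of_le' hn
    rw [istCard_succ_succ (m + 1), sum_det_or_tail_det]
    simp only [Nat.add_succ_sub_one, show m + 3 - 2 = m + 1 from rfl]
    ring
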